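/- arXiv:1903.11524 — 5 statements merged into one kernel-verified Lean document; each statement's English description precedes it below -/
import Mathlib

section
/- Let p ≥ 1 and let α₁, …, α_p ∈ [0, 1). Define coefficients φ̃_k = (−1)^{k+1} e_k(α₁, …, α_p) for k = 1, …, p, where e_k is the k-th elementary symmetric polynomial. Then the Yule–Walker system with γ₀ = 1, i.e. the p linear equations γ_k = Σ_{j=1}^p φ̃_j γ_{|k−j|} for k = 1, …, p (where γ₀ = 1) in the unknowns γ₁, …, γ_p ∈ ℝ, has a unique solution (γ̃₁, …, γ̃_p); moreover the number σ̃_Z² := 1 − Σ_{i=1}^p φ̃_i γ̃_i is strictly positive. -/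
/-! Write `c_j = (-1)^j e_j(α)`, so that `∑ c_j z^j = ∏ (1 - α_i z)`, and let `S` be the backward
shift on two-sided sequences.  With `c_0 = 1` the Yule–Walker equations say
`∑_j c_j γ_{|k-j|} = 0` for `1 ≤ k ≤ p`, and the innovation variance is the same sum at `k = 0`.

*Existence and positivity.*  Each factor `1 - α_i S` can be inverted on causal summable sequences
by a geometric series, which gives a causal summable `ψ` with `∏ (1 - α_i S) ψ = δ₀`
(`exists_impulse`).  The autocovariance `v_k = ∑_n ψ_n ψ_{n+k}` is even and satisfies
`∑_j c_j v_{k-j} = ψ_{-k}`, which is `0` for `k > 0` and `1` for `k = 0`.  Hence `γ = v / v_0` solves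
the system, with innovation variance `1 / v_0 > 0` (`exists_autocov`).

*Uniqueness.*  Suppose that `d_0, …, d_p` satisfies the homogeneous equations for all
`0 ≤ k ≤ p`.  Extend it by the recurrence and then evenly to a sequence `x` on `ℤ`, and let
`u_k = ∑_j c_j x_{k-j}`, so that `u_k = 0` for `k ≥ 0`.  Then `w_k = ∑_i c_i u_{k+i}` is even in `k`
and vanishes for `k ≥ 0`, so `w = 0`; as `c_0 = 1`, solving for `u_k` in terms of later values
gives `u = 0`.  Since every `α_i` lies in `[0, 1)`, the sequence `x` is bounded, and a bounded
two-sided sequence killed by `∏ (1 - α_i S)` is zero (`homogeneous_eq_zero`).  For two solutions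
of the Yule–Walker system with innovation variances `σ` and `σ'`, this applies to
`γ' - (σ'/σ) γ`, and the value at index `0` then gives `σ' = σ`. -/

open Finset

/-- Extension of a vector `g = (γ₁, …, γ_p)` of autocovariances to a function on `ℕ`
with `γ₀ = 1` (values beyond `p` are irrelevant and set to `0`). -/
noncomputable def extGamma (p : ℕ) (g : Fin p → ℝ) : ℕ → ℝ :=
  fun n => if h : 1 ≤ n ∧ n ≤ p then g ⟨n - 1, by omega⟩ else if n = 0 then 1 else 0

/-- The `k`-th elementary symmetric polynomial evaluated at `α₁, …, α_p`. -/
noncomputable def esymmEval (p : ℕ) (α : Fin p → ℝ) (k : ℕ) : ℝ :=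
  ∑ A ∈ Finset.powersetCard k (Finset.univ : Finset (Fin p)), ∏ i ∈ A, α i

namespace YuleWalker

/-- The backward shift `(S x)_k = x_{k-1}` on two-sided real sequences. -/
def shift : Module.End ℝ (ℤ → ℝ) where
  toFun x := fun k => x (k - 1)
  map_add' _ _ := rfl
  map_smul' _ _ := rfl

lemma shift_pow_apply (j : ℕ) (x : ℤ → ℝ) (k : ℤ) : (shift ^ j) x k = x (k - j) := by
  induction j generalizing k with
  | zero => simp
  | succ j ih =>
    rw [pow_succ', Module.End.mul_apply]
    change (shift ^ j) x (k - 1) = _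
    rw [ih]
    congr 1
    push_cast
    ring

/-- The operator `∏_{i ∈ s} (1 - α_i S)`, where `S` is the backward shift. -/
noncomputable def arOp {ι : Type*} (α : ι → ℝ) (s : Finset ι) : Module.End ℝ (ℤ → ℝ) :=
  Polynomial.aeval shift (∏ i ∈ s, (1 - Polynomial.C (α i) * Polynomial.X))

lemma arOp_empty {ι : Type*} (α : ι → ℝ) (x : ℤ → ℝ) : arOp α ∅ x = x := by
  simp [arOp]

lemma arOp_insert {ι : Type*} [DecidableEq ι] (α : ι → ℝ) {s : Finset ι} {a : ι} (ha : a ∉ s)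
    (x : ℤ → ℝ) (k : ℤ) :
    arOp α (insert a s) x k = arOp α s x k - α a * arOp α s x (k - 1) := by
  unfold arOp
  rw [Finset.prod_insert ha, map_mul, Module.End.mul_apply]
  simp [shift]

/-- The coefficient `c_j = (-1)^j e_j(α)` of `z^j` in `∏ (1 - α_i z)`. -/
noncomputable def coef (p : ℕ) (α : Fin p → ℝ) (j : ℕ) : ℝ := (-1) ^ j * esymmEval p α j

lemma coef_zero (p : ℕ) (α : Fin p → ℝ) : coef p α 0 = 1 := by
  simp [coef, esymmEval]

lemma arOp_univ (p : ℕ) (α : Fin p → ℝ) (x : ℤ → ℝ) (k : ℤ) :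
    arOp α univ x k = ∑ j ∈ range (p + 1), coef p α j * x (k - j) := by
  have h : (∏ i : Fin p, (1 - Polynomial.C (α i) * Polynomial.X) : Polynomial ℝ)
      = ∑ j ∈ range (p + 1), Polynomial.C (coef p α j) * Polynomial.X ^ j := by
    simp only [sub_eq_add_neg, Finset.prod_one_add]
    rw [Finset.sum_powerset, Finset.card_univ, Fintype.card_fin]
    refine Finset.sum_congr rfl fun j _ => ?_
    rw [coef, esymmEval, Finset.mul_sum, map_sum, Finset.sum_mul]
    refine Finset.sum_congr rfl fun A hA => ?_
    rw [Finset.prod_neg, Finset.prod_mul_distrib, Finset.prod_const,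
      (Finset.mem_powersetCard.1 hA).2]
    simp [mul_assoc]
  rw [arOp, h, map_sum, LinearMap.sum_apply, Finset.sum_apply]
  refine Finset.sum_congr rfl fun j _ => ?_
  rw [map_mul, map_pow, Polynomial.aeval_X, Polynomial.aeval_C, Module.End.mul_apply,
    Module.algebraMap_end_apply, Pi.smul_apply, shift_pow_apply, smul_eq_mul]

lemma bounded_of_step {a M : ℝ} (ha : a ∈ Set.Ico (0 : ℝ) 1) (x : ℤ → ℝ)
    (h : ∀ k : ℤ, 0 ≤ k → |x k - a * x (k - 1)| ≤ M) :
    ∃ M', ∀ k : ℤ, 0 ≤ k → |x k| ≤ M' := by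
  obtain ⟨h0, h1⟩ := ha
  have h1' : 0 < 1 - a := by linarith
  -- Any `B ≥ |x₋₁|` with `a * B + M ≤ B` is preserved by the recursion.
  set B := max |x (-1)| (M / (1 - a)) with hB
  have hMB : M ≤ B * (1 - a) := (div_le_iff₀ h1').1 (le_max_right _ _)
  have key : ∀ n : ℕ, |x ((n : ℤ) - 1)| ≤ B := by
    intro n
    induction n with
    | zero =>
      rw [Nat.cast_zero, zero_sub]
      exact le_max_left _ _
    | succ n ih =>
      have h2 := h n (by positivity)
      have h3 : |x n| ≤ |x n - a * x ((n : ℤ) - 1)| + |a * x ((n : ℤ) - 1)| := by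
        simpa using abs_add_le (x n - a * x ((n : ℤ) - 1)) (a * x ((n : ℤ) - 1))
      rw [abs_mul, abs_of_nonneg h0] at h3
      have h4 := mul_le_mul_of_nonneg_left ih h0
      push_cast
      rw [add_sub_cancel_right]
      linarith
  refine ⟨B, fun k hk => ?_⟩
  have := key (k + 1).toNat
  rwa [Int.toNat_of_nonneg (by omega), add_sub_cancel_right] at this

lemma bounded_of_arOp {ι : Type*} [DecidableEq ι] (α : ι → ℝ)
    (hα : ∀ i, α i ∈ Set.Ico (0 : ℝ) 1) (s : Finset ι) (x : ℤ → ℝ) :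
    (∃ M, ∀ k : ℤ, 0 ≤ k → |arOp α s x k| ≤ M) → ∃ M, ∀ k : ℤ, 0 ≤ k → |x k| ≤ M := by
  induction s using Finset.induction_on with
  | empty => simp [arOp_empty]
  | insert a s ha ih =>
    rintro ⟨M, hM⟩
    exact ih (bounded_of_step (hα a) _ fun k hk => arOp_insert α ha x k ▸ hM k hk)

lemma arOp_bounded {ι : Type*} [DecidableEq ι] (α : ι → ℝ) (s : Finset ι) (x : ℤ → ℝ)
    (hx : ∃ M, ∀ k, |x k| ≤ M) : ∃ M, ∀ k, |arOp α s x k| ≤ M := by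
  induction s using Finset.induction_on with
  | empty => simpa [arOp_empty] using hx
  | insert a s ha ih =>
    obtain ⟨M, hM⟩ := ih
    refine ⟨M + |α a| * M, fun k => ?_⟩
    rw [arOp_insert α ha]
    refine (abs_sub _ _).trans ?_
    rw [abs_mul]
    gcongr <;> apply hM

/-- A bounded two-sided solution of `x_k = a x_{k-1}` vanishes, because
`x_k = a ^ n x_{k-n}` for all `n`. -/
lemma eq_zero_of_step {a M : ℝ} (ha : a ∈ Set.Ico (0 : ℝ) 1) (x : ℤ → ℝ)
    (hx : ∀ k, |x k| ≤ M) (h : ∀ k, x k - a * x (k - 1) = 0) (k : ℤ) : x k = 0 := by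
  obtain ⟨h0, h1⟩ := ha
  have key : ∀ n : ℕ, x k = a ^ n * x (k - n) := by
    intro n
    induction n with
    | zero => simp
    | succ n ih =>
      have h2 := h (k - n)
      rw [ih, sub_eq_zero.1 h2, pow_succ, mul_assoc]
      congr 3
      push_cast
      ring
  have hle : ∀ n : ℕ, |x k| ≤ a ^ n * M := fun n => by
    rw [key n, abs_mul, abs_of_nonneg (pow_nonneg h0 n)]
    exact mul_le_mul_of_nonneg_left (hx _) (pow_nonneg h0 n)
  have ht : Filter.Tendsto (fun n : ℕ => a ^ n * M) Filter.atTop (nhds 0) := by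
    simpa using (tendsto_pow_atTop_nhds_zero_of_lt_one h0 h1).mul_const M
  exact abs_nonpos_iff.1 (ge_of_tendsto' ht hle)

lemma eq_zero_of_arOp {ι : Type*} [DecidableEq ι] (α : ι → ℝ)
    (hα : ∀ i, α i ∈ Set.Ico (0 : ℝ) 1) (s : Finset ι) (x : ℤ → ℝ) (hx : ∃ M, ∀ k, |x k| ≤ M) :
    (∀ k, arOp α s x k = 0) → ∀ k, x k = 0 := by
  induction s using Finset.induction_on with
  | empty => simp [arOp_empty]
  | insert a s ha ih =>
    intro h
    obtain ⟨M, hM⟩ := arOp_bounded α s x hx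
    exact ih (eq_zero_of_step (hα a) _ hM fun k => arOp_insert α ha x k ▸ h k)

/-- `1 - a S` is onto the causal summable sequences: `x_n = ∑_k a ^ k y_{n-k}`. -/
lemma exists_step {a : ℝ} (ha : a ∈ Set.Ico (0 : ℝ) 1) (y : ℤ → ℝ) (hy : Summable y)
    (hc : ∀ n < 0, y n = 0) :
    ∃ x : ℤ → ℝ, Summable x ∧ (∀ n < 0, x n = 0) ∧ ∀ n, x n - a * x (n - 1) = y n := by
  obtain ⟨h0, h1⟩ := ha
  have hg : Summable fun k : ℕ => a ^ k := summable_geometric_of_lt_one h0 h1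
  have hp : Summable fun q : ℤ × ℕ => a ^ q.2 * y q.1 := by
    have := Summable.mul_norm hy.norm hg.norm
    exact this.of_norm.congr fun q => mul_comm _ _
  -- Substituting `n - k` for `n` is a bijection of the pairs `(n, k)`.
  let e : ℤ × ℕ ≃ ℤ × ℕ :=
    { toFun := fun q => (q.1 - q.2, q.2)
      invFun := fun q => (q.1 + q.2, q.2)
      left_inv := fun q => by simp
      right_inv := fun q => by simp }
  have hq : Summable fun q : ℤ × ℕ => a ^ q.2 * y (q.1 - q.2) := (e.summable_iff).2 hp
  refine ⟨fun n => ∑' k : ℕ, a ^ k * y (n - k), hq.prod, fun n hn => ?_, fun n => ?_⟩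
  · have : ∀ k : ℕ, a ^ k * y (n - k) = 0 := fun k => by rw [hc _ (by omega), mul_zero]
    simp [this]
  · have hs : Summable fun k : ℕ => a ^ k * y (n - k) := hq.prod_factor n
    simp only
    rw [hs.tsum_eq_zero_add, ← tsum_mul_left]
    have : ∀ k : ℕ, a ^ (k + 1) * y (n - ((k + 1 : ℕ) : ℤ)) = a * (a ^ k * y (n - 1 - k)) := by
      intro k
      rw [pow_succ', mul_assoc]
      congr 3
      push_cast
      ring
    simp only [this]
    simp

/-- The causal impulse response `ψ` of the autoregression, the coefficient sequence of
`∏ (1 - α_i z)⁻¹`. -/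
lemma exists_impulse {ι : Type*} [DecidableEq ι] (α : ι → ℝ)
    (hα : ∀ i, α i ∈ Set.Ico (0 : ℝ) 1) (s : Finset ι) (y : ℤ → ℝ) (hy : Summable y)
    (hc : ∀ n < 0, y n = 0) :
    ∃ x : ℤ → ℝ, Summable x ∧ (∀ n < 0, x n = 0) ∧ ∀ n, arOp α s x n = y n := by
  induction s using Finset.induction_on generalizing y with
  | empty => exact ⟨y, hy, hc, fun n => by rw [arOp_empty]⟩
  | insert a s ha ih =>
    obtain ⟨z, hz, hzc, hzy⟩ := exists_step (hα a) y hy hc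
    obtain ⟨x, hx, hxc, hxz⟩ := ih z hz hzc
    exact ⟨x, hx, hxc, fun n => by rw [arOp_insert α ha, hxz, hxz, hzy]⟩

/-- The autocovariance sequence `v_k = ∑_n ψ_n ψ_{n+k}`, normalized to innovation variance `1`. -/
lemma exists_autocov (p : ℕ) (α : Fin p → ℝ) (hα : ∀ i, α i ∈ Set.Ico (0 : ℝ) 1) :
    ∃ v : ℕ → ℝ, 0 < v 0 ∧ ∀ k : ℕ,
      ∑ j ∈ range (p + 1), coef p α j * v ((k : ℤ) - j).natAbs = if k = 0 then 1 else 0 := by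
  obtain ⟨ψ, hs, hc, hψ⟩ := exists_impulse α hα univ (Pi.single (0 : ℤ) (1 : ℝ))
    (summable_of_ne_finset_zero (s := {0}) fun b hb => by
      simp at hb; simp [hb])
    (fun n hn => by simp [hn.ne])
  have hprod : ∀ k : ℤ, Summable fun n => ψ n * ψ (n + k) := by
    intro k
    have h2 : Summable fun q : ℤ × ℤ => ψ q.1 * ψ q.2 := (Summable.mul_norm hs.norm hs.norm).of_norm
    exact h2.comp_injective (i := fun n : ℤ => (n, n + k)) fun m n h => (Prod.ext_iff.1 h).1
  set v : ℤ → ℝ := fun k => ∑' n, ψ n * ψ (n + k) with hv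
  have heven : ∀ k, v (-k) = v k := by
    intro k
    simp only [hv]
    rw [← (Equiv.addRight k).tsum_eq]
    exact tsum_congr fun n => by simp [mul_comm]
  have habs : ∀ k : ℤ, v k.natAbs = v k := by
    intro k
    rcases Int.natAbs_eq k with h | h
    · rw [← h]
    · conv_rhs => rw [h, heven]
  have hconv : ∀ k : ℤ, ∑ j ∈ range (p + 1), coef p α j * v (k - j) = ψ (-k) := by
    intro k
    simp only [hv, ← tsum_mul_left]
    rw [← Summable.tsum_finsetSum fun (j : ℕ) _ => (hprod (k - j)).mul_left (coef p α j)]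
    have : ∀ n, ∑ j ∈ range (p + 1), coef p α j * (ψ n * ψ (n + (k - j)))
        = ψ n * (Pi.single (0 : ℤ) (1 : ℝ) : ℤ → ℝ) (n + k) := by
      intro n
      rw [← hψ, arOp_univ, Finset.mul_sum]
      refine Finset.sum_congr rfl fun j _ => ?_
      rw [add_sub_assoc]
      ring
    simp only [this]
    rw [tsum_eq_single (-k)]
    · simp
    · intro n hn
      rw [Pi.single_eq_of_ne (by omega), mul_zero]
  have hψ0 : ψ 0 = 1 := by
    have h := hψ 0
    rw [arOp_univ, Finset.sum_eq_single 0] at h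
    · simpa [coef_zero] using h
    · intro j _ hj
      rw [hc _ (by omega), mul_zero]
    · simp
  refine ⟨fun k => v k, ?_, fun k => ?_⟩
  · have h : ψ 0 * ψ (0 + 0) ≤ v 0 := by
      simp only [hv]
      exact (hprod 0).le_tsum 0 fun n _ => by rw [add_zero]; exact mul_self_nonneg _
    simp only [add_zero, hψ0] at h
    simp only [Nat.cast_zero]
    linarith
  · simp only [habs]
    rw [hconv]
    rcases Nat.eq_zero_or_pos k with rfl | hk
    · simp [hψ0]
    · rw [hc _ (by omega), if_neg (by omega)]

/-- The extension of `d_0, …, d_p` to `ℕ` by the recurrence `∑_{j ≤ p} c_j d_{n-j} = 0` for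
`n > p`, where `c_0 = 1`. -/
noncomputable def extend (p : ℕ) (c d : ℕ → ℝ) (n : ℕ) : ℝ :=
  if _h : n ≤ p then d n else -∑ j : Fin p, c (j + 1) * extend p c d (n - (j + 1))
termination_by n
decreasing_by omega

/-- The homogeneous Yule–Walker system, with the equation at `k = 0` included, has only the
zero solution. -/
lemma homogeneous_eq_zero (p : ℕ) (α : Fin p → ℝ) (hα : ∀ i, α i ∈ Set.Ico (0 : ℝ) 1) (d : ℕ → ℝ)
    (hd : ∀ k ≤ p, ∑ j ∈ range (p + 1), coef p α j * d ((k : ℤ) - j).natAbs = 0) :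
    ∀ k ≤ p, d k = 0 := by
  set c := coef p α with hcdef
  have hc0 : c 0 = 1 := coef_zero p α
  set E := extend p c d with hE
  have hE1 : ∀ k ≤ p, E k = d k := fun k hk => by rw [hE, extend, dif_pos hk]
  set x : ℤ → ℝ := fun k => E k.natAbs with hx
  have hxneg : ∀ k, x (-k) = x k := fun k => by simp [hx]
  set u : ℤ → ℝ := fun k => ∑ j ∈ range (p + 1), c j * x (k - j) with hu
  have hu0 : ∀ k : ℤ, 0 ≤ k → u k = 0 := by
    intro k hk
    lift k to ℕ using hk
    rcases le_or_gt k p with hkp | hkp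
    · rw [← hd k hkp]
      refine Finset.sum_congr rfl fun j hj => ?_
      rw [Finset.mem_range] at hj
      simp only [hx]
      rw [hE1 _ (by omega)]
    · simp only [hu]
      rw [Finset.sum_range_succ', hc0]
      have h1 : x ((k : ℤ) - ((0 : ℕ) : ℤ))
          = -∑ j : Fin p, c (j + 1) * E (k - (j + 1)) := by
        simp only [hx, Nat.cast_zero, sub_zero, Int.natAbs_natCast]
        rw [hE, extend, dif_neg (by omega)]
      rw [h1, Finset.sum_range, one_mul, add_neg_eq_zero]
      refine Finset.sum_congr rfl fun j _ => ?_
      simp only [hx]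
      congr 2
      omega
  set w : ℤ → ℝ := fun k => ∑ i ∈ range (p + 1), c i * u (k + i) with hw
  have hwneg : ∀ k, w (-k) = w k := by
    intro k
    simp only [hw, hu, Finset.mul_sum]
    rw [Finset.sum_comm]
    refine Finset.sum_congr rfl fun i _ => Finset.sum_congr rfl fun j _ => ?_
    rw [← hxneg (k + i - j), mul_left_comm]
    congr 3
    ring
  have hw0 : ∀ k, w k = 0 := by
    have hpos : ∀ k : ℤ, 0 ≤ k → w k = 0 := fun k hk =>
      Finset.sum_eq_zero fun i _ => by rw [hu0 _ (by omega), mul_zero]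
    intro k
    rcases le_total 0 k with h | h
    · exact hpos k h
    · rw [← hwneg]
      exact hpos _ (by omega)
  have hun : ∀ n : ℕ, u (-(n : ℤ)) = 0 := by
    intro n
    induction n using Nat.strong_induction_on with
    | _ n ih =>
      have h := hw0 (-(n : ℤ))
      simp only [hw] at h
      rw [Finset.sum_eq_single 0] at h
      · simpa [hc0] using h
      · intro i _ hi
        rcases le_or_gt n i with hni | hni
        · rw [hu0 _ (by omega), mul_zero]
        · have h2 := ih (n - i) (by omega)
          rw [Nat.cast_sub hni.le, neg_sub, sub_eq_neg_add] at h2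
          rw [h2, mul_zero]
      · simp
  have huz : ∀ k, arOp α univ x k = 0 := by
    intro k
    rw [arOp_univ]
    change u k = 0
    rcases le_total 0 k with h | h
    · exact hu0 k h
    · have h2 := hun (-k).toNat
      rwa [Int.toNat_of_nonneg (by omega), neg_neg] at h2
  obtain ⟨M, hM⟩ := bounded_of_arOp α hα univ x ⟨0, fun k _ => by rw [huz, abs_zero]⟩
  have hb : ∀ k, |x k| ≤ M := by
    intro k
    rcases le_total 0 k with h | h
    · exact hM k h
    · rw [← hxneg]
      exact hM _ (by omega)
  intro k hk
  rw [← hE1 k hk]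
  simpa [hx] using eq_zero_of_arOp α hα univ x ⟨M, hb⟩ huz k

/-- Moving everything to one side, with `c_0 = 1`, turns a Yule–Walker right-hand side into a
convolution with `c`. -/
lemma sum_coef (p : ℕ) (α : Fin p → ℝ) (f : ℕ → ℝ) :
    ∑ j ∈ range (p + 1), coef p α j * f j
      = f 0 - ∑ j ∈ Icc 1 p, ((-1 : ℝ) ^ (j + 1) * esymmEval p α j) * f j := by
  have hr : range (p + 1) = insert 0 (Icc 1 p) := by
    ext j
    simp only [Finset.mem_range, Finset.mem_insert, Finset.mem_Icc]
    omega
  rw [hr, Finset.sum_insert (by simp), coef_zero, one_mul, sub_eq_add_neg,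
    ← Finset.sum_neg_distrib]
  congr 1
  refine Finset.sum_congr rfl fun j _ => ?_
  rw [coef, pow_succ]
  ring

lemma extGamma_zero (p : ℕ) (g : Fin p → ℝ) : extGamma p g 0 = 1 := by simp [extGamma]

lemma extGamma_succ (p : ℕ) (g : Fin p → ℝ) (i : Fin p) : extGamma p g (i + 1) = g i := by
  have := i.isLt
  simp [extGamma]

end YuleWalker

open YuleWalker

/-- For `α₁, …, α_p ∈ [0,1)` and `φ̃_k = (-1)^{k+1} e_k(α₁, …, α_p)`, the Yule–Walker
system with `γ₀ = 1` has a unique solution `(γ̃₁, …, γ̃_p)`, and the innovation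
variance `σ̃_Z² = 1 - ∑ φ̃ᵢ γ̃ᵢ` is strictly positive. -/
theorem yule_walker_unique_solution_esymm (p : ℕ) (hp : 1 ≤ p) (α : Fin p → ℝ)
    (hα : ∀ i, α i ∈ Set.Ico (0 : ℝ) 1) :
    ∃ g : Fin p → ℝ,
      (∀ k ∈ Finset.Icc 1 p,
        extGamma p g k =
          ∑ j ∈ Finset.Icc 1 p,
            ((-1 : ℝ) ^ (j + 1) * esymmEval p α j) *
              extGamma p g ((k : ℤ) - (j : ℤ)).natAbs) ∧
      0 < 1 - ∑ i ∈ Finset.Icc 1 p,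
            ((-1 : ℝ) ^ (i + 1) * esymmEval p α i) * extGamma p g i ∧
      ∀ g' : Fin p → ℝ,
        (∀ k ∈ Finset.Icc 1 p,
          extGamma p g' k =
            ∑ j ∈ Finset.Icc 1 p,
              ((-1 : ℝ) ^ (j + 1) * esymmEval p α j) *
                extGamma p g' ((k : ℤ) - (j : ℤ)).natAbs) → g' = g := by
  obtain ⟨v, hv0, hv⟩ := exists_autocov p α hα
  set g : Fin p → ℝ := fun i => v (i + 1) / v 0 with hg
  have hext : ∀ k ≤ p, extGamma p g k = v k / v 0 := by
    intro k hk
    rcases Nat.eq_zero_or_pos k with rfl | hk0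
    · rw [extGamma_zero, div_self hv0.ne']
    · obtain ⟨m, rfl⟩ : ∃ m, k = m + 1 := ⟨k - 1, by omega⟩
      exact extGamma_succ p g ⟨m, by omega⟩
  have hgsum : ∀ k ≤ p, ∑ j ∈ range (p + 1), coef p α j * extGamma p g ((k : ℤ) - j).natAbs
      = if k = 0 then 1 / v 0 else 0 := by
    intro k hk
    have h : ∀ j ∈ range (p + 1), coef p α j * extGamma p g ((k : ℤ) - j).natAbs
        = coef p α j * v ((k : ℤ) - j).natAbs / v 0 := by
      intro j hj
      rw [Finset.mem_range] at hj
      rw [hext _ (by omega), mul_div_assoc]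
    rw [Finset.sum_congr rfl h, ← Finset.sum_div, hv]
    split_ifs <;> simp
  refine ⟨g, fun k hk => ?_, ?_, fun g' hg' => ?_⟩
  · rw [Finset.mem_Icc] at hk
    have h := hgsum k hk.2
    rw [sum_coef p α (fun j => extGamma p g ((k : ℤ) - j).natAbs), if_neg (by omega)] at h
    simpa using sub_eq_zero.1 h
  · have h := hgsum 0 (Nat.zero_le _)
    rw [sum_coef p α (fun j => extGamma p g (((0 : ℕ) : ℤ) - j).natAbs), if_pos rfl] at h
    simp only [Nat.cast_zero, sub_zero, zero_sub, Int.natAbs_neg, Int.natAbs_natCast,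
      Int.natAbs_zero, extGamma_zero] at h
    rw [h]
    positivity
  · set σ := ∑ j ∈ range (p + 1), coef p α j * extGamma p g' (((0 : ℕ) : ℤ) - j).natAbs with hσ
    have hsum_other : ∀ k ≤ p, ∑ j ∈ range (p + 1), coef p α j * extGamma p g' ((k : ℤ) - j).natAbs
        = if k = 0 then σ else 0 := by
      intro k hk
      split_ifs with hk0
      · rw [hk0]
      · rw [sum_coef p α (fun j => extGamma p g' ((k : ℤ) - j).natAbs), sub_eq_zero]
        simpa using hg' k (Finset.mem_Icc.2 ⟨by omega, hk⟩)
    -- The innovation variance of `g` is `1 / v 0`, so this combination also kills equation `0`.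
    have hz := homogeneous_eq_zero p α hα
      (fun k => extGamma p g' k - σ * v 0 * extGamma p g k) (by
        intro k hk
        simp only [mul_sub, Finset.sum_sub_distrib, mul_left_comm _ (σ * v 0)]
        rw [← Finset.mul_sum, hsum_other k hk, hgsum k hk]
        split_ifs
        · field_simp
          simp
        · simp)
    have h0 := hz 0 (Nat.zero_le _)
    simp only [extGamma_zero, mul_one] at h0
    have hone : σ * v 0 = 1 := (sub_eq_zero.1 h0).symm
    funext i
    have hi := hz (i + 1) i.isLt
    simp only [hone, one_mul, extGamma_succ] at hi
    exact sub_eq_zero.1 hi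
end

section
/- Let p ≥ 1 and α ∈ [0, 1). Define coefficients φ̃_k = (−1)^{k+1} · C(p, k) · α^k for k = 1, …, p, where C(p, k) is the binomial coefficient. Then the Yule–Walker system with γ₀ = 1, i.e. the p linear equations γ_k = Σ_{j=1}^p φ̃_j γ_{|k−j|} for k = 1, …, p (where γ₀ = 1) in the unknowns γ₁, …, γ_p ∈ ℝ, has a unique solution (γ̃₁, …, γ̃_p), and σ̃_Z² := 1 − Σ_{i=1}^p φ̃_i γ̃_i is strictly positive. -/
/-!
The coefficients `φ̃` are those of `(1 - α B) ^ p = 1 - ∑ φ̃ⱼ Bʲ`, where `B` is the backward shift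
on two-sided real sequences. For `0 ≤ α < 1` and any integer step `s`, the operator
`T = 1 - α S`, with `S` the shift by `s`, is injective on bounded sequences (`eq_zero_of_opT`) and
has there the right inverse `I = ∑ αᵐ Sᵐ` (`opT_opI`).

*Existence.* Put `b = I₋₁ᵖ δ` and `γ = I₁ᵖ b`, so that `T₁ᵖ γ = b` and `T₋₁ᵖ T₁ᵖ γ = δ`. The
operators `I` preserve positivity, so `γ 0 ≥ 1`; the forward inverse `I₋₁` preserves being
supported on `n ≤ 0` together with the value at `0`, so `b n = 0` for `n ≥ 1` and `b 0 = 1`.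
Reflection swaps `T₁` and `T₋₁`, so injectivity makes `γ` even. Hence `γ / γ 0` solves the
Yule–Walker system, with innovation variance `b 0 / γ 0 = 1 / γ 0 > 0`.

*Uniqueness.* Extend a solution by the recursion to all indices and evenly to `ℤ`, giving `x` with
`T₁ᵖ x = 0` on `n ≥ 1`. Such an `x` is bounded (`bounded_of_opT_pow`). The sequence
`T₋₁ᵖ T₁ᵖ x` is even and vanishes for `n ≥ 1`, so it equals `c δ`; by injectivity `x = c γ`, and
`x 0 = 1` forces `c = 1 / γ 0`.
-/

open Finset

namespace YuleWalkerBinom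

/-- The operator `1 - α S`, where `(S x) n = x (n - s)` is the shift by `s`. -/
def opT (α : ℝ) (s : ℤ) : Module.End ℝ (ℤ → ℝ) where
  toFun x n := x n - α * x (n - s)
  map_add' x y := by ext n; simp only [Pi.add_apply]; ring
  map_smul' c x := by ext n; simp only [Pi.smul_apply, smul_eq_mul, RingHom.id_apply]; ring

/-- The Neumann series `∑ αᵐ Sᵐ`, with `S` the shift by `s`; it is meaningful on bounded
sequences when `0 ≤ α < 1`. -/
noncomputable def opI (α : ℝ) (s : ℤ) (x : ℤ → ℝ) : ℤ → ℝ :=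
  fun n => ∑' m : ℕ, α ^ m * x (n - s * m)

/-- Boundedness of a two-sided sequence. -/
def Bd (x : ℤ → ℝ) : Prop := ∃ M, ∀ n, |x n| ≤ M

variable {α : ℝ}

lemma opT_apply (s : ℤ) (x : ℤ → ℝ) (n : ℤ) : opT α s x n = x n - α * x (n - s) := rfl

lemma opT_pow_succ (s : ℤ) (p : ℕ) (x : ℤ → ℝ) :
    (opT α s ^ (p + 1)) x = (opT α s ^ p) (opT α s x) := by
  rw [pow_succ, Module.End.mul_apply]

lemma opT_commute (s t : ℤ) : Commute (opT α s) (opT α t) := by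
  refine LinearMap.ext fun x => ?_
  ext n
  simp only [Module.End.mul_apply, opT_apply]
  rw [show n - t - s = n - s - t by ring]
  ring

/-- The binomial expansion of `(1 - α B) ^ p`. -/
lemma opT_one_pow_apply (p : ℕ) (x : ℤ → ℝ) (n : ℤ) :
    (opT α 1 ^ p) x n = x n - ∑ j ∈ Finset.Icc 1 p,
      ((-1 : ℝ) ^ (j + 1) * (p.choose j : ℝ) * α ^ j) * x (n - j) := by
  let S : Module.End ℝ (ℤ → ℝ) :=
    { toFun := fun x n => x (n - 1)
      map_add' := fun x y => rfl
      map_smul' := fun c x => rfl }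
  have hS : ∀ (j : ℕ) (x : ℤ → ℝ) (n : ℤ), (S ^ j) x n = x (n - j) := by
    intro j
    induction j with
    | zero => intro x n; simp
    | succ j ih =>
      intro x n
      rw [pow_succ, Module.End.mul_apply, ih]
      change x (n - j - 1) = _
      congr 1
      push_cast
      ring
  have hT : opT α 1 = (-α) • S + 1 := by
    refine LinearMap.ext fun x => ?_
    ext n
    change x n - α * x (n - 1) = (-α) * x (n - 1) + x n
    ring
  have h1 : (opT α 1 ^ p) x n =
      ∑ j ∈ Finset.range (p + 1), (-α) ^ j * (p.choose j : ℝ) * x (n - j) := by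
    rw [hT, (Commute.one_right _).add_pow]
    simp only [one_pow, mul_one, LinearMap.sum_apply, Finset.sum_apply]
    refine Finset.sum_congr rfl fun j _ => ?_
    rw [← nsmul_eq_mul', smul_pow, LinearMap.smul_apply, LinearMap.smul_apply, Pi.smul_apply,
      Pi.smul_apply, hS, nsmul_eq_mul, smul_eq_mul]
    ring
  rw [h1, Finset.range_eq_Ico, Finset.sum_eq_sum_Ico_succ_bot (Nat.succ_pos p),
    sub_eq_add_neg (x n), ← Finset.sum_neg_distrib]
  congr 1
  · simp
  · refine Finset.sum_congr (by ext; simp) fun j _ => ?_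
    rw [neg_pow, pow_succ (-1 : ℝ) j]
    ring

/-- Reflection `n ↦ -n` exchanges the shifts by `s` and by `-s`. -/
lemma opT_pow_reflect (s : ℤ) (p : ℕ) (x : ℤ → ℝ) (n : ℤ) :
    (opT α s ^ p) (fun k => x (-k)) n = (opT α (-s) ^ p) x (-n) := by
  induction p generalizing x with
  | zero => simp
  | succ p ih =>
    have h : opT α s (fun k => x (-k)) = fun k => opT α (-s) x (-k) := by
      ext k
      simp only [opT_apply]
      rw [show -(k - s) = -k - -s by ring]
    rw [opT_pow_succ, opT_pow_succ, ← ih, h]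

/-- If `x` is even, then so is `T₋₁ᵖ T₁ᵖ x`. -/
lemma opT_opT_even (p : ℕ) (x : ℤ → ℝ) (hx : ∀ n, x (-n) = x n) (n : ℤ) :
    (opT α (-1) ^ p) ((opT α 1 ^ p) x) (-n) = (opT α (-1) ^ p) ((opT α 1 ^ p) x) n := by
  rw [← opT_pow_reflect]
  have h : (fun k => (opT α 1 ^ p) x (-k)) = (opT α (-1) ^ p) x := by
    ext k
    have := opT_pow_reflect (α := α) (-1) p x k
    rw [neg_neg] at this
    rw [← this, funext hx]
  rw [h]
  exact congrFun (LinearMap.congr_fun ((opT_commute (α := α) 1 (-1)).pow_pow p p).eq x) n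

lemma Bd.opT {x : ℤ → ℝ} (hx : Bd x) (s : ℤ) : Bd (opT α s x) := by
  obtain ⟨M, hM⟩ := hx
  refine ⟨M + |α| * M, fun n => ?_⟩
  rw [opT_apply]
  refine (abs_sub _ _).trans (add_le_add (hM n) ?_)
  rw [abs_mul]
  exact mul_le_mul_of_nonneg_left (hM _) (abs_nonneg α)

lemma Bd.opT_pow {x : ℤ → ℝ} (hx : Bd x) (s : ℤ) (p : ℕ) :
    Bd ((YuleWalkerBinom.opT α s ^ p) x) := by
  induction p generalizing x with
  | zero => simpa using hx
  | succ p ih => rw [opT_pow_succ]; exact ih (hx.opT s)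

/-- Iterating `x n = α x (n - s)` gives `|x n| ≤ αᵐ M` for every `m`, hence `x = 0`. -/
lemma eq_zero_of_opT (h0 : 0 ≤ α) (h1 : α < 1) {s : ℤ} {x : ℤ → ℝ} (hx : Bd x)
    (h : opT α s x = 0) : x = 0 := by
  obtain ⟨M, hM⟩ := hx
  have hrec : ∀ n, x n = α * x (n - s) := fun n => by
    have := congrFun h n
    rw [opT_apply, Pi.zero_apply] at this
    linarith
  have hb : ∀ m : ℕ, ∀ n, |x n| ≤ α ^ m * M := by
    intro m
    induction m with
    | zero => simpa using hM
    | succ m ih =>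
      intro n
      rw [hrec n, abs_mul, abs_of_nonneg h0, pow_succ', mul_assoc]
      exact mul_le_mul_of_nonneg_left (ih _) h0
  ext n
  have ht : Filter.Tendsto (fun m : ℕ => α ^ m * M) Filter.atTop (nhds 0) := by
    simpa using (tendsto_pow_atTop_nhds_zero_of_lt_one h0 h1).mul_const M
  exact abs_nonpos_iff.mp (ge_of_tendsto' ht fun m => hb m n)

lemma eq_zero_of_opT_pow (h0 : 0 ≤ α) (h1 : α < 1) {s : ℤ} (p : ℕ) {x : ℤ → ℝ} (hx : Bd x)
    (h : (opT α s ^ p) x = 0) : x = 0 := by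
  induction p generalizing x with
  | zero => simpa using h
  | succ p ih =>
    rw [opT_pow_succ] at h
    exact eq_zero_of_opT h0 h1 hx (ih (hx.opT s) h)

lemma eq_of_opT_opT (h0 : 0 ≤ α) (h1 : α < 1) (p : ℕ) {x y : ℤ → ℝ} (hx : Bd x) (hy : Bd y)
    (h : (opT α (-1) ^ p) ((opT α 1 ^ p) x) = (opT α (-1) ^ p) ((opT α 1 ^ p) y)) : x = y := by
  have hxy : Bd (x - y) := by
    obtain ⟨M, hM⟩ := hx
    obtain ⟨N, hN⟩ := hy
    exact ⟨M + N, fun n => (abs_sub _ _).trans (add_le_add (hM n) (hN n))⟩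
  refine sub_eq_zero.mp (eq_zero_of_opT_pow h0 h1 (s := 1) p hxy ?_)
  refine eq_zero_of_opT_pow h0 h1 (s := -1) p (hxy.opT_pow 1 p) ?_
  rw [map_sub, map_sub, h, sub_self]

lemma norm_term_le (h0 : 0 ≤ α) {x : ℤ → ℝ} {M : ℝ} (hM : ∀ n, |x n| ≤ M) (s n : ℤ) (m : ℕ) :
    ‖α ^ m * x (n - s * m)‖ ≤ α ^ m * M := by
  rw [Real.norm_eq_abs, abs_mul, abs_of_nonneg (pow_nonneg h0 m)]
  exact mul_le_mul_of_nonneg_left (hM _) (pow_nonneg h0 m)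

lemma Bd.opI (h0 : 0 ≤ α) (h1 : α < 1) {x : ℤ → ℝ} (hx : Bd x) (s : ℤ) : Bd (opI α s x) := by
  obtain ⟨M, hM⟩ := hx
  exact ⟨(1 - α)⁻¹ * M, fun n => tsum_of_norm_bounded
    ((hasSum_geometric_of_lt_one h0 h1).mul_right M) (norm_term_le h0 hM s n)⟩

lemma opI_eq (h0 : 0 ≤ α) (h1 : α < 1) {x : ℤ → ℝ} (hx : Bd x) (s n : ℤ) :
    opI α s x n = x n + α * opI α s x (n - s) := by
  obtain ⟨M, hM⟩ := hx
  have hs : Summable fun m : ℕ => α ^ m * x (n - s * m) :=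
    Summable.of_norm_bounded ((summable_geometric_of_lt_one h0 h1).mul_right M)
      (norm_term_le h0 hM s n)
  unfold opI
  rw [hs.tsum_eq_zero_add, ← tsum_mul_left]
  congr 1
  · simp
  · refine tsum_congr fun m => ?_
    rw [pow_succ', mul_assoc]
    congr 3
    push_cast
    ring

lemma opT_opI (h0 : 0 ≤ α) (h1 : α < 1) {x : ℤ → ℝ} (hx : Bd x) (s : ℤ) :
    opT α s (opI α s x) = x := by
  ext n
  rw [opT_apply, opI_eq h0 h1 hx s n]
  ring

lemma iterate_opI (h0 : 0 ≤ α) (h1 : α < 1) {x : ℤ → ℝ} (hx : Bd x) (s : ℤ) (p : ℕ) :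
    Bd ((opI α s)^[p] x) ∧ (opT α s ^ p) ((opI α s)^[p] x) = x := by
  induction p with
  | zero => simpa using hx
  | succ p ih =>
    rw [Function.iterate_succ_apply', opT_pow_succ, opT_opI h0 h1 ih.1]
    exact ⟨ih.1.opI h0 h1 s, ih.2⟩

lemma le_iterate_opI (h0 : 0 ≤ α) (h1 : α < 1) {x : ℤ → ℝ} (hx : Bd x) (hn : ∀ n, 0 ≤ x n)
    (s : ℤ) (p : ℕ) (n : ℤ) : x n ≤ (opI α s)^[p] x n := by
  induction p generalizing n with
  | zero => exact le_rfl
  | succ p ih =>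
    rw [Function.iterate_succ_apply', opI_eq h0 h1 (iterate_opI h0 h1 hx s p).1]
    have : 0 ≤ opI α s ((opI α s)^[p] x) (n - s) :=
      tsum_nonneg fun m => mul_nonneg (pow_nonneg h0 m) ((hn _).trans (ih _))
    have := mul_nonneg h0 this
    linarith [ih n]

/-- The forward inverse `I₋₁` preserves being supported on `n ≤ 0`, and then also the value
at `0`. -/
lemma iterate_opI_support (h0 : 0 ≤ α) (h1 : α < 1) {x : ℤ → ℝ} (hx : Bd x)
    (hz : ∀ n, 1 ≤ n → x n = 0) (p : ℕ) :
    (∀ n, 1 ≤ n → (opI α (-1))^[p] x n = 0) ∧ (opI α (-1))^[p] x 0 = x 0 := by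
  induction p with
  | zero => exact ⟨hz, rfl⟩
  | succ p ih =>
    have hz' : ∀ n, 1 ≤ n → (opI α (-1))^[p + 1] x n = 0 := by
      intro n hn
      rw [Function.iterate_succ_apply']
      unfold opI
      refine (tsum_congr fun m => ?_).trans tsum_zero
      exact mul_eq_zero_of_right _ (ih.1 _ (by omega))
    refine ⟨hz', ?_⟩
    have h := hz' (0 - -1) (by norm_num)
    rw [Function.iterate_succ_apply'] at h ⊢
    rw [opI_eq h0 h1 (iterate_opI h0 h1 hx (-1) p).1, h, ih.2]
    ring

/-- A bounded even `γ` with `T₋₁ᵖ T₁ᵖ γ = δ`: the autocovariance function of the autoregressive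
process with unit innovation variance. -/
lemma exists_gamma (h0 : 0 ≤ α) (h1 : α < 1) (p : ℕ) :
    ∃ γ : ℤ → ℝ, Bd γ ∧ (∀ n, γ (-n) = γ n) ∧ 1 ≤ γ 0 ∧
      (∀ n, 1 ≤ n → (opT α 1 ^ p) γ n = 0) ∧ (opT α 1 ^ p) γ 0 = 1 ∧
      (opT α (-1) ^ p) ((opT α 1 ^ p) γ) = Pi.single 0 1 := by
  set δ : ℤ → ℝ := Pi.single 0 1 with hδ
  have hδn : ∀ n, 0 ≤ δ n := fun n => by
    rw [hδ, Pi.single_apply]; split_ifs <;> norm_num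
  have hδb : Bd δ := ⟨1, fun n => by rw [hδ, Pi.single_apply]; split_ifs <;> norm_num⟩
  have hδz : ∀ n, 1 ≤ n → δ n = 0 := fun n hn => by
    rw [hδ, Pi.single_apply, if_neg (by omega)]
  have hδ0 : δ 0 = 1 := by simp [hδ]
  obtain ⟨hb, hTb⟩ := iterate_opI h0 h1 hδb (-1) p
  obtain ⟨hbz, hb0⟩ := iterate_opI_support h0 h1 hδb hδz p
  have hbn := le_iterate_opI h0 h1 hδb hδn (-1) p
  set b := (opI α (-1))^[p] δ
  obtain ⟨hγ, hTγ⟩ := iterate_opI h0 h1 hb 1 p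
  have hγn := le_iterate_opI h0 h1 hb (fun n => (hδn n).trans (hbn n)) 1 p 0
  set γ := (opI α 1)^[p] b
  refine ⟨γ, hγ, ?_, by linarith, by rwa [hTγ], by rw [hTγ, hb0, hδ0], by rw [hTγ, hTb]⟩
  -- The reflection of `γ` solves the same equation, so it equals `γ`.
  have hr : (fun n => γ (-n)) = γ := by
    refine eq_of_opT_opT h0 h1 p (hγ.imp fun M hM n => hM (-n)) hγ ?_
    have e1 : (opT α 1 ^ p) (fun n => γ (-n)) = fun n => (opT α (-1) ^ p) γ (-n) :=
      funext (opT_pow_reflect 1 p γ)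
    rw [e1, funext (opT_pow_reflect (-1) p ((opT α (-1) ^ p) γ)), neg_neg]
    have e2 : (opT α 1 ^ p) ((opT α (-1) ^ p) γ) = (opT α (-1) ^ p) ((opT α 1 ^ p) γ) :=
      LinearMap.congr_fun ((opT_commute (α := α) 1 (-1)).pow_pow p p).eq γ
    rw [e2, hTγ, hTb]
    ext n
    simp only [hδ, Pi.single_apply, neg_eq_zero]
  exact congrFun hr

/-- A one-sided version of the stability of `1 - α B`: if `T₁ᵖ x` is bounded on `n ≥ 0`, so
is `x`. -/
lemma bounded_of_opT_pow (h0 : 0 ≤ α) (h1 : α < 1) (p : ℕ) (x : ℤ → ℝ)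
    (h : ∃ M, ∀ n : ℕ, |(opT α 1 ^ p) x n| ≤ M) : ∃ M, ∀ n : ℕ, |x n| ≤ M := by
  induction p generalizing x with
  | zero => simpa using h
  | succ p ih =>
    rw [opT_pow_succ] at h
    obtain ⟨M, hM⟩ := ih _ h
    -- `K = max |x 0| (M / (1 - α))` satisfies `M + α K ≤ K`.
    refine ⟨max |x 0| (M / (1 - α)), fun n => ?_⟩
    induction n with
    | zero => exact le_max_left _ _
    | succ n ihn =>
      have h2 := hM (n + 1)
      rw [opT_apply] at h2
      have e : ((n + 1 : ℕ) : ℤ) - 1 = n := by push_cast; ring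
      rw [e] at h2
      set K := max |x 0| (M / (1 - α))
      have h3 : M ≤ K * (1 - α) := (div_le_iff₀ (by linarith)).mp (le_max_right _ _)
      have h4 : |α * x n| ≤ α * K := by
        rw [abs_mul, abs_of_nonneg h0]; exact mul_le_mul_of_nonneg_left ihn h0
      have h5 := abs_sub_abs_le_abs_sub (x ((n + 1 : ℕ) : ℤ)) (α * x n)
      linarith

/-- The extension of the values `f 0, …, f p` to all of `ℕ` by the recursion
`e n = ∑ j, a j * e (n - j)`, `1 ≤ j ≤ p`, for `n > p`. -/
noncomputable def extend (p : ℕ) (a f : ℕ → ℝ) (n : ℕ) : ℝ :=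
  if n ≤ p then f n else ∑ j : Fin p, a (j + 1) * extend p a f (n - (j + 1))
termination_by n
decreasing_by omega

lemma extend_of_le {p : ℕ} {a f : ℕ → ℝ} {n : ℕ} (h : n ≤ p) : extend p a f n = f n := by
  rw [extend, if_pos h]

lemma extend_of_lt {p : ℕ} {a f : ℕ → ℝ} {n : ℕ} (h : p < n) :
    extend p a f n = ∑ j ∈ Finset.Icc 1 p, a j * extend p a f (n - j) := by
  rw [extend, if_neg (by omega), Fin.sum_univ_eq_sum_range
    (fun j => a (j + 1) * extend p a f (n - (j + 1))) p, Finset.range_eq_Ico,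
    Finset.sum_Ico_add' (fun j => a j * extend p a f (n - j)) 0 p 1]
  rfl

/-- Every Yule–Walker solution is the restriction of a multiple of `γ`. -/
lemma solution_eq (h0 : 0 ≤ α) (h1 : α < 1) (p : ℕ) {γ : ℤ → ℝ} (hγ : Bd γ) (hγ0 : 1 ≤ γ 0)
    (hTγ : (opT α (-1) ^ p) ((opT α 1 ^ p) γ) = Pi.single 0 1)
    (f : ℕ → ℝ) (hf0 : f 0 = 1)
    (hf : ∀ k ∈ Finset.Icc 1 p, f k = ∑ j ∈ Finset.Icc 1 p,
      ((-1 : ℝ) ^ (j + 1) * (p.choose j : ℝ) * α ^ j) * f ((k : ℤ) - (j : ℤ)).natAbs)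
    (k : ℕ) (hk : k ≤ p) : f k = γ k / γ 0 := by
  let a : ℕ → ℝ := fun j => (-1 : ℝ) ^ (j + 1) * (p.choose j : ℝ) * α ^ j
  let x : ℤ → ℝ := fun n => extend p a f n.natAbs
  have hxe : ∀ n, x (-n) = x n := fun n => by simp only [x, Int.natAbs_neg]
  have hTx : ∀ n, 1 ≤ n → (opT α 1 ^ p) x n = 0 := by
    intro n hn
    lift n to ℕ using by omega
    rw [opT_one_pow_apply, sub_eq_zero]
    by_cases hnp : n ≤ p
    · have hx : ∀ m : ℤ, m.natAbs ≤ p → x m = f m.natAbs := fun m hm => extend_of_le hm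
      rw [hx n (by omega), Int.natAbs_natCast, hf n (Finset.mem_Icc.mpr ⟨by omega, hnp⟩)]
      refine Finset.sum_congr rfl fun j hj => ?_
      rw [Finset.mem_Icc] at hj
      rw [hx _ (by omega)]
    · have := extend_of_lt (a := a) (f := f) (not_le.mp hnp)
      simp only [x, Int.natAbs_natCast]
      rw [this]
      refine Finset.sum_congr rfl fun j hj => ?_
      rw [Finset.mem_Icc] at hj
      rw [show ((n : ℤ) - (j : ℤ)).natAbs = n - j by omega]
  have hxb : Bd x := by
    obtain ⟨M, hM⟩ := bounded_of_opT_pow h0 h1 p x ⟨|(opT α 1 ^ p) x 0|, fun n => by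
      rcases Nat.eq_zero_or_pos n with rfl | hn
      · simp
      · rw [hTx n (by omega)]; simp⟩
    refine ⟨M, fun n => ?_⟩
    have := hM n.natAbs
    simpa only [x, Int.natAbs_natCast] using this
  set c := (opT α (-1) ^ p) ((opT α 1 ^ p) x) 0 with hc
  -- The forward operator `T₋₁` only looks at larger indices.
  have hfwd : ∀ (q : ℕ) (y : ℤ → ℝ), (∀ n, 1 ≤ n → y n = 0) →
      ∀ n, 1 ≤ n → (opT α (-1) ^ q) y n = 0 := by
    intro q
    induction q with
    | zero => intro y hy; simpa using hy
    | succ q ih =>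
      intro y hy
      rw [opT_pow_succ]
      refine ih _ fun n hn => ?_
      rw [opT_apply, hy n hn, hy _ (by omega)]
      ring
  have hδ : (opT α (-1) ^ p) ((opT α 1 ^ p) x) = c • Pi.single 0 1 := by
    ext n
    rw [Pi.smul_apply, Pi.single_apply, smul_eq_mul]
    rcases lt_trichotomy n 0 with hn | rfl | hn
    · rw [← opT_opT_even p x hxe, hfwd p _ hTx _ (by omega), if_neg hn.ne, mul_zero]
    · simp [hc]
    · rw [hfwd p _ hTx _ (by omega), if_neg hn.ne', mul_zero]
  have hcb : Bd (c • γ) := by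
    obtain ⟨M, hM⟩ := hγ
    refine ⟨|c| * M, fun n => ?_⟩
    rw [Pi.smul_apply, smul_eq_mul, abs_mul]
    exact mul_le_mul_of_nonneg_left (hM n) (abs_nonneg c)
  have hx : x = c • γ := by
    refine eq_of_opT_opT h0 h1 p hxb hcb ?_
    rw [hδ, map_smul, map_smul, hTγ]
  have hx' : ∀ m : ℕ, m ≤ p → f m = c * γ m := fun m hm => by
    have := congrFun hx m
    simp only [x, Int.natAbs_natCast, extend_of_le hm, Pi.smul_apply, smul_eq_mul] at this
    exact this
  have hc0 := hx' 0 (Nat.zero_le p)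
  rw [hf0, Nat.cast_zero] at hc0
  rw [hx' k hk, eq_div_iff (by linarith)]
  linear_combination (-γ k) * hc0

end YuleWalkerBinom

open YuleWalkerBinom in
/-- For `α ∈ [0,1)` and `φ̃_k = (-1)^{k+1} C(p,k) α^k`, the Yule–Walker system with
`γ₀ = 1` has a unique solution `(γ̃₁, …, γ̃_p)`, and the innovation variance
`σ̃_Z² = 1 - ∑ φ̃ᵢ γ̃ᵢ` is strictly positive. -/
theorem yule_walker_unique_solution_binom (p : ℕ) (hp : 1 ≤ p) (α : ℝ)
    (hα : α ∈ Set.Ico (0 : ℝ) 1) :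
    ∃ g : Fin p → ℝ,
      (∀ k ∈ Finset.Icc 1 p,
        extGamma p g k =
          ∑ j ∈ Finset.Icc 1 p,
            ((-1 : ℝ) ^ (j + 1) * (p.choose j : ℝ) * α ^ j) *
              extGamma p g ((k : ℤ) - (j : ℤ)).natAbs) ∧
      0 < 1 - ∑ i ∈ Finset.Icc 1 p,
            ((-1 : ℝ) ^ (i + 1) * (p.choose i : ℝ) * α ^ i) * extGamma p g i ∧
      ∀ g' : Fin p → ℝ,
        (∀ k ∈ Finset.Icc 1 p,
          extGamma p g' k =
            ∑ j ∈ Finset.Icc 1 p,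
              ((-1 : ℝ) ^ (j + 1) * (p.choose j : ℝ) * α ^ j) *
                extGamma p g' ((k : ℤ) - (j : ℤ)).natAbs) → g' = g := by
  obtain ⟨h0, h1⟩ := hα
  obtain ⟨γ, hγ, hev, hγ0, hTz, hT0, hTT⟩ := exists_gamma h0 h1 p
  have hne : γ 0 ≠ 0 := by linarith
  have habs : ∀ n : ℤ, γ n.natAbs = γ n := fun n => by
    rcases Int.natAbs_eq n with h | h
    · rw [← h]
    · conv_rhs => rw [h, hev]
  set g : Fin p → ℝ := fun i => γ ((i : ℕ) + 1 : ℕ) / γ 0 with hg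
  have hext : ∀ n : ℤ, n.natAbs ≤ p → extGamma p g n.natAbs = γ n / γ 0 := by
    intro n hn
    rw [← habs n]
    unfold extGamma
    split_ifs with h2 h3
    · simp only [hg]
      rw [Nat.sub_add_cancel h2.1]
    · rw [h3, Nat.cast_zero, div_self hne]
    · omega
  refine ⟨g, fun k hk => ?_, ?_, fun g' hg' => ?_⟩
  · rw [Finset.mem_Icc] at hk
    have h := hTz k (by omega)
    rw [opT_one_pow_apply, sub_eq_zero] at h
    have hk' := hext k (by omega)
    rw [Int.natAbs_natCast] at hk'
    rw [hk', h, Finset.sum_div]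
    refine Finset.sum_congr rfl fun j hj => ?_
    rw [Finset.mem_Icc] at hj
    rw [hext _ (by omega), mul_div_assoc]
  · -- The innovation variance is `(T₁ᵖ γ) 0 / γ 0`.
    have h : 1 - ∑ i ∈ Finset.Icc 1 p,
        ((-1 : ℝ) ^ (i + 1) * (p.choose i : ℝ) * α ^ i) * extGamma p g i =
        (opT α 1 ^ p) γ 0 / γ 0 := by
      rw [opT_one_pow_apply, sub_div, div_self hne, Finset.sum_div]
      congr 1
      refine Finset.sum_congr rfl fun j hj => ?_
      rw [Finset.mem_Icc] at hj
      have hj' := hext j (by omega)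
      rw [Int.natAbs_natCast] at hj'
      rw [hj', zero_sub, hev, mul_div_assoc]
    rw [h, hT0]
    positivity
  · ext i
    have h := solution_eq h0 h1 p hγ hγ0 hTT (extGamma p g') (by simp [extGamma]) hg'
      (i + 1) (by omega)
    rw [← show extGamma p g' (i + 1) = g' i by
      unfold extGamma
      rw [dif_pos ⟨by omega, by omega⟩]
      rfl, h]
end

section
/- Let p ≥ 1 and let α₁, …, α_p ∈ [0, 1). Define φ̃_k = (−1)^{k+1} e_k(α₁, …, α_p) for k = 1, …, p, where e_k is the k-th elementary symmetric polynomial, and let (γ̃₁, …, γ̃_p) be the unique solution of the Yule–Walker system with γ̃₀ = 1. Then the (p+1) × (p+1) symmetric Toeplitz matrix Γ with entries Γ_{ij} = γ̃_{|i−j|} (indices 0 ≤ i, j ≤ p) is positive definite. -/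
/-!
The Toeplitz form `B(f, g) = ∑ i j, fᵢ gⱼ γ_{|i-j|}` on polynomials of degree at most `p` is
invariant under multiplication by `X`, and the Yule–Walker equations say exactly that
`A = ∏ i, (X - αᵢ)` is `B`-orthogonal to every polynomial of degree less than `p`.

For `deg r < p` with coefficient `c` at `X ^ (p - 1)`, the polynomial `r' = X r mod A = X r - c A`
therefore satisfies the Lyapunov identity `B(r, r) = B(r', r') + c² σ`, where `σ = B(A, A)`
(`toeplitzForm_step`). As all roots of `A` lie in the open unit disc, `X ^ n r mod A` tends to `0`
coefficientwise (`tendsto_of_tendsto_prod`, `tendsto_coeff_modByMonic`). Since `B(1, 1) = 1 > 0`,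
iterating the identity from `r = 1` forces `σ > 0`, and then iterating it from an arbitrary `r`
gives `B(r, r) ≥ 0`. The inequality is strict for `r ≠ 0`: multiplying by `X`, which does not change
the form, one may assume that `deg r = p - 1`, so that `c ≠ 0`. A polynomial of degree at most `p`
splits orthogonally as `r + c A`, which gives positivity on the full space.
-/

open Finset

open Polynomial Filter Topology

namespace YuleWalker

/-! ### The Toeplitz form -/

/-- The Toeplitz bilinear form with symbol `G`, applied to the coefficients of index at most `p`
of two polynomials. Coefficients of larger index are ignored. -/
noncomputable def toeplitzForm (p : ℕ) (G : ℕ → ℝ) (f g : ℝ[X]) : ℝ :=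
  ∑ i ∈ range (p + 1), ∑ j ∈ range (p + 1),
    f.coeff i * g.coeff j * G ((i : ℤ) - (j : ℤ)).natAbs

section Form

variable (p : ℕ) (G : ℕ → ℝ)

lemma toeplitzForm_comm (f g : ℝ[X]) : toeplitzForm p G f g = toeplitzForm p G g f := by
  unfold toeplitzForm
  rw [Finset.sum_comm]
  refine Finset.sum_congr rfl fun i _ => Finset.sum_congr rfl fun j _ => ?_
  rw [← Int.natAbs_neg, neg_sub]
  ring

lemma toeplitzForm_add_smul (f g h : ℝ[X]) (c : ℝ) :
    toeplitzForm p G (f + C c * g) h = toeplitzForm p G f h + c * toeplitzForm p G g h := by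
  unfold toeplitzForm
  simp only [Finset.mul_sum, ← Finset.sum_add_distrib]
  refine Finset.sum_congr rfl fun i _ => Finset.sum_congr rfl fun j _ => ?_
  rw [coeff_add, coeff_C_mul]
  ring

/-- Pythagoras for the Toeplitz form. -/
lemma toeplitzForm_add_of_orthogonal {A r : ℝ[X]} (c : ℝ) (h : toeplitzForm p G A r = 0) :
    toeplitzForm p G (r + C c * A) (r + C c * A) =
      toeplitzForm p G r r + c ^ 2 * toeplitzForm p G A A := by
  rw [toeplitzForm_add_smul, toeplitzForm_comm p G r, toeplitzForm_comm p G A,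
    toeplitzForm_add_smul, toeplitzForm_add_smul, toeplitzForm_comm p G r A, h]
  ring

lemma toeplitzForm_X_mul {f : ℝ[X]} (hf : f.degree < p) :
    toeplitzForm p G (X * f) (X * f) = toeplitzForm p G f f := by
  have hp : f.coeff p = 0 := coeff_eq_zero_of_degree_lt hf
  have hl : toeplitzForm p G (X * f) (X * f) = ∑ i ∈ range p, ∑ j ∈ range p,
      f.coeff i * f.coeff j * G ((i : ℤ) - (j : ℤ)).natAbs := by
    simp only [toeplitzForm, Finset.sum_range_succ', coeff_X_mul, coeff_X_mul_zero]
    simp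
  have hr : toeplitzForm p G f f = ∑ i ∈ range p, ∑ j ∈ range p,
      f.coeff i * f.coeff j * G ((i : ℤ) - (j : ℤ)).natAbs := by
    simp only [toeplitzForm, Finset.sum_range_succ, hp]
    simp
  rw [hl, hr]

lemma toeplitzForm_one : toeplitzForm p G 1 1 = G 0 := by
  simp [toeplitzForm, coeff_one]

lemma toeplitzForm_eq_zero_of_orthogonal {A r : ℝ[X]}
    (hA : ∀ m < p, ∑ i ∈ range (p + 1), A.coeff i * G ((i : ℤ) - (m : ℤ)).natAbs = 0)
    (hr : r.degree < p) : toeplitzForm p G A r = 0 := by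
  unfold toeplitzForm
  rw [Finset.sum_comm, Finset.sum_range_succ, coeff_eq_zero_of_degree_lt hr]
  simp only [mul_zero, zero_mul, Finset.sum_const_zero, add_zero]
  refine Finset.sum_eq_zero fun m hm => ?_
  have := hA m (Finset.mem_range.1 hm)
  calc _ = r.coeff m * ∑ i ∈ range (p + 1), A.coeff i * G ((i : ℤ) - (m : ℤ)).natAbs := by
        rw [Finset.mul_sum]
        exact Finset.sum_congr rfl fun i _ => by ring
    _ = 0 := by rw [this, mul_zero]

end Form

/-! ### Stability of multiplication by `X` modulo `A` -/

section Stability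

/-- A sequence driven by a stable first-order recursion with vanishing input vanishes at infinity. -/
lemma tendsto_zero_of_sub_mul {a : ℝ} (h0 : 0 ≤ a) (h1 : a < 1) {u : ℕ → ℝ}
    (h : Tendsto (fun n => u (n + 1) - a * u n) atTop (𝓝 0)) : Tendsto u atTop (𝓝 0) := by
  rw [Metric.tendsto_atTop] at h ⊢
  intro ε hε
  obtain ⟨N, hN⟩ := h (ε / 2 * (1 - a)) (by have := sub_pos.2 h1; positivity)
  -- `|u n| - ε / 2` contracts by the factor `a` from index `N` on.
  have hv : ∀ n, |u (N + n)| - ε / 2 ≤ a ^ n * |u N| := by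
    intro n
    induction n with
    | zero => simp; positivity
    | succ n ih =>
      have hw := hN (N + n) (Nat.le_add_right _ _)
      rw [Real.dist_eq, sub_zero] at hw
      have htri : |u (N + n + 1)| ≤ |u (N + n + 1) - a * u (N + n)| + a * |u (N + n)| := by
        have := abs_add_le (u (N + n + 1) - a * u (N + n)) (a * u (N + n))
        rwa [sub_add_cancel, abs_mul, abs_of_nonneg h0] at this
      have := mul_le_mul_of_nonneg_left ih h0
      rw [← add_assoc, pow_succ']
      nlinarith
  have hlim : Tendsto (fun n : ℕ => a ^ n * |u N|) atTop (𝓝 0) := by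
    simpa using (tendsto_pow_atTop_nhds_zero_of_lt_one h0 h1).mul_const |u N|
  obtain ⟨M, hM⟩ := eventually_atTop.1 (hlim.eventually_lt_const (half_pos hε))
  refine ⟨N + M, fun n hn => ?_⟩
  obtain ⟨k, rfl⟩ := Nat.exists_eq_add_of_le (show N ≤ n by omega)
  rw [Real.dist_eq, sub_zero]
  have := hM k (by omega)
  have := hv k
  linarith

/-- If a linear functional `ℓ` applied to `X ^ n * (∏ i ∈ s, (X - α i)) * f` tends to `0`, then the
factors, whose roots are in the open unit disc, can be removed. -/
lemma tendsto_of_tendsto_prod {ι : Type*} (α : ι → ℝ)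
    (hα : ∀ i, α i ∈ Set.Ico (0 : ℝ) 1) (ℓ : ℝ[X] →ₗ[ℝ] ℝ) (s : Finset ι) : ∀ f : ℝ[X],
    Tendsto (fun n : ℕ => ℓ (X ^ n * ((∏ i ∈ s, (X - C (α i))) * f))) atTop (𝓝 0) →
      Tendsto (fun n : ℕ => ℓ (X ^ n * f)) atTop (𝓝 0) := by
  classical
  induction s using Finset.induction_on with
  | empty => intro f h; simpa using h
  | insert i s hi ih =>
    intro f h
    refine tendsto_zero_of_sub_mul (hα i).1 (hα i).2 ?_
    have h2 := ih ((X - C (α i)) * f) (by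
      convert h using 4
      rw [Finset.prod_insert hi]; ring)
    convert h2 using 2 with n
    rw [← smul_eq_mul (α i), ← map_smul, ← map_sub, smul_eq_C_mul]
    congr 1
    ring

lemma tendsto_coeff_modByMonic {ι : Type*} (α : ι → ℝ)
    (hα : ∀ i, α i ∈ Set.Ico (0 : ℝ) 1) (s : Finset ι) (f : ℝ[X]) (k : ℕ) :
    Tendsto (fun n : ℕ => (X ^ n * f %ₘ ∏ i ∈ s, (X - C (α i))).coeff k) atTop (𝓝 0) := by
  refine tendsto_of_tendsto_prod α hα
    ((lcoeff ℝ k).comp (modByMonicHom (∏ i ∈ s, (X - C (α i))))) s f ?_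
  have hm : (∏ i ∈ s, (X - C (α i))).Monic := monic_prod_of_monic _ _ fun i _ => monic_X_sub_C _
  have : ∀ n : ℕ, X ^ n * ((∏ i ∈ s, (X - C (α i))) * f) %ₘ (∏ i ∈ s, (X - C (α i))) = 0 := by
    intro n
    rw [mul_left_comm, self_mul_modByMonic hm]
  simp [modByMonicHom, this]

end Stability

/-! ### The Lyapunov identity and positivity -/

section Positivity

variable {p : ℕ} {G : ℕ → ℝ} {A : ℝ[X]}

/-- Subtracting the right multiple of a monic polynomial of degree `p` kills the coefficient at
`X ^ p`. -/
lemma degree_sub_lt_of_monic (hm : A.Monic) (hd : A.degree = p) {f : ℝ[X]}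
    (hf : f.degree ≤ p) : (f - C (f.coeff p) * A).degree < p := by
  have hA : A.coeff p = 1 := by
    rw [← natDegree_eq_of_degree_eq_some hd]; exact hm
  rw [degree_lt_iff_coeff_zero]
  intro m h
  rw [coeff_sub, coeff_C_mul]
  rcases h.eq_or_lt with rfl | h
  · rw [hA]; ring
  · have h' : (p : WithBot ℕ) < m := by exact_mod_cast h
    rw [coeff_eq_zero_of_degree_lt (hf.trans_lt h'),
      coeff_eq_zero_of_degree_lt (hd.trans_lt h')]
    ring

lemma degree_X_mul_le {f : ℝ[X]} (hf : f.degree < p) : (X * f).degree ≤ (p : WithBot ℕ) := by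
  rw [degree_le_iff_coeff_zero]
  rintro (_ | m) h
  · simp
  · rw [coeff_X_mul]
    refine coeff_eq_zero_of_degree_lt (hf.trans_le ?_)
    have : p < m + 1 := by exact_mod_cast h
    exact_mod_cast Nat.lt_succ_iff.1 this

/-- The orthogonal decomposition `f = r + c A` of a polynomial of degree at most `p`. -/
lemma toeplitzForm_split (hm : A.Monic) (hd : A.degree = p)
    (hA : ∀ m < p, ∑ i ∈ range (p + 1), A.coeff i * G ((i : ℤ) - (m : ℤ)).natAbs = 0)
    {f : ℝ[X]} (hf : f.degree ≤ p) :
    toeplitzForm p G f f =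
      toeplitzForm p G (f - C (f.coeff p) * A) (f - C (f.coeff p) * A) +
        f.coeff p ^ 2 * toeplitzForm p G A A := by
  have := toeplitzForm_add_of_orthogonal p G (f.coeff p)
    (toeplitzForm_eq_zero_of_orthogonal p G hA (degree_sub_lt_of_monic hm hd hf))
  rwa [sub_add_cancel] at this

/-- The Lyapunov identity for multiplication by `X` modulo `A`. -/
lemma toeplitzForm_step (hm : A.Monic) (hd : A.degree = p)
    (hA : ∀ m < p, ∑ i ∈ range (p + 1), A.coeff i * G ((i : ℤ) - (m : ℤ)).natAbs = 0)
    {r : ℝ[X]} (hr : r.degree < p) :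
    toeplitzForm p G r r = toeplitzForm p G (X * r %ₘ A) (X * r %ₘ A) +
      (X * r).coeff p ^ 2 * toeplitzForm p G A A := by
  have hX := degree_X_mul_le hr
  have hmod : X * r %ₘ A = X * r - C ((X * r).coeff p) * A :=
    (div_modByMonic_unique (C ((X * r).coeff p)) _ hm
      ⟨by ring, hd ▸ degree_sub_lt_of_monic hm hd hX⟩).2
  rw [hmod, ← toeplitzForm_split hm hd hA hX, toeplitzForm_X_mul p G hr]

variable (hm : A.Monic) (hd : A.degree = p)
    (hA : ∀ m < p, ∑ i ∈ range (p + 1), A.coeff i * G ((i : ℤ) - (m : ℤ)).natAbs = 0)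
    (hlim : ∀ (f : ℝ[X]) (k : ℕ), Tendsto (fun n : ℕ => (X ^ n * f %ₘ A).coeff k) atTop (𝓝 0))

include hlim in
lemma tendsto_toeplitzForm_iterate (f : ℝ[X]) :
    Tendsto (fun n : ℕ => toeplitzForm p G (X ^ n * f %ₘ A) (X ^ n * f %ₘ A)) atTop (𝓝 0) := by
  unfold toeplitzForm
  rw [show (0 : ℝ) = ∑ i ∈ range (p + 1), ∑ j ∈ range (p + 1),
    0 * 0 * G ((i : ℤ) - (j : ℤ)).natAbs by simp]
  exact tendsto_finsetSum _ fun i _ => tendsto_finsetSum _ fun j _ =>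
    ((hlim f i).mul (hlim f j)).mul_const _

include hm hd hA

lemma toeplitzForm_iterate_step (f : ℝ[X]) (n : ℕ) :
    toeplitzForm p G (X ^ n * f %ₘ A) (X ^ n * f %ₘ A) =
      toeplitzForm p G (X ^ (n + 1) * f %ₘ A) (X ^ (n + 1) * f %ₘ A) +
      (X * (X ^ n * f %ₘ A)).coeff p ^ 2 * toeplitzForm p G A A := by
  have h : X ^ (n + 1) * f %ₘ A = X * (X ^ n * f %ₘ A) %ₘ A := by
    rw [pow_succ', mul_assoc]
    refine modByMonic_eq_of_dvd_sub hm ?_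
    rw [← mul_sub]
    refine dvd_mul_of_dvd_right ⟨X ^ n * f /ₘ A, ?_⟩ _
    rw [sub_eq_iff_eq_add']
    exact (modByMonic_add_div _ A).symm
  rw [h]
  exact toeplitzForm_step hm hd hA (hd ▸ degree_modByMonic_lt _ hm)

include hlim

/-- The innovation variance is positive: otherwise the form would be nondecreasing along the iterates of
`1`, from the value `G 0 = 1` to the limit `0`. -/
lemma toeplitzForm_self_pos (hp : 1 ≤ p) (hG : G 0 = 1) : 0 < toeplitzForm p G A A := by
  by_contra! hσ
  have hmono : Monotone fun n : ℕ =>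
      toeplitzForm p G (X ^ n * 1 %ₘ A) (X ^ n * 1 %ₘ A) := by
    refine monotone_nat_of_le_succ fun n => ?_
    rw [toeplitzForm_iterate_step hm hd hA 1 n]
    have := mul_nonpos_of_nonneg_of_nonpos (sq_nonneg ((X * (X ^ n * 1 %ₘ A)).coeff p)) hσ
    linarith
  have h0 := hmono.ge_of_tendsto (tendsto_toeplitzForm_iterate hlim 1) 0
  have h1 : (1 : ℝ[X]) %ₘ A = 1 := by
    rw [modByMonic_eq_self_iff hm, hd, degree_one]
    exact_mod_cast hp
  simp only [pow_zero, mul_one, h1, toeplitzForm_one, hG] at h0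
  linarith

lemma toeplitzForm_nonneg (hσ : 0 < toeplitzForm p G A A) {r : ℝ[X]} (hr : r.degree < p) :
    0 ≤ toeplitzForm p G r r := by
  have hanti : Antitone fun n : ℕ =>
      toeplitzForm p G (X ^ n * r %ₘ A) (X ^ n * r %ₘ A) := by
    refine antitone_nat_of_succ_le fun n => ?_
    rw [toeplitzForm_iterate_step hm hd hA r n]
    have := mul_nonneg (sq_nonneg ((X * (X ^ n * r %ₘ A)).coeff p)) hσ.le
    linarith
  have h0 := hanti.le_of_tendsto (tendsto_toeplitzForm_iterate hlim r) 0
  have h1 : r %ₘ A = r := by rwa [modByMonic_eq_self_iff hm, hd]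
  simpa [h1] using h0

lemma toeplitzForm_pos_of_degree_lt (hσ : 0 < toeplitzForm p G A A) (d : ℕ) :
    ∀ r : ℝ[X], r ≠ 0 → r.natDegree + d + 1 = p → 0 < toeplitzForm p G r r := by
  have hlt : ∀ r : ℝ[X], r.natDegree < p → r.degree < p := fun r h =>
    degree_le_natDegree.trans_lt (by exact_mod_cast h)
  induction d with
  | zero =>
    intro r hr h
    have hrd := hlt r (by omega)
    rw [toeplitzForm_step hm hd hA hrd]
    have h1 := toeplitzForm_nonneg hm hd hA hlim hσ
      (hd ▸ degree_modByMonic_lt (X * r) hm : (X * r %ₘ A).degree < p)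
    have h2 : (X * r).coeff p ≠ 0 := by
      rw [← h, add_zero, coeff_X_mul]
      exact leadingCoeff_ne_zero.2 hr
    positivity
  | succ d ih =>
    intro r hr h
    rw [← toeplitzForm_X_mul p G (hlt r (by omega))]
    refine ih _ (mul_ne_zero X_ne_zero hr) ?_
    rw [natDegree_X_mul hr]
    omega

lemma toeplitzForm_pos (hp : 1 ≤ p) (hG : G 0 = 1) {f : ℝ[X]} (hf : f.degree ≤ p)
    (hf0 : f ≠ 0) : 0 < toeplitzForm p G f f := by
  have hσ := toeplitzForm_self_pos hm hd hA hlim hp hG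
  rw [toeplitzForm_split hm hd hA hf]
  have hr := degree_sub_lt_of_monic hm hd hf
  by_cases hc : f.coeff p = 0
  · simp only [hc, map_zero, zero_mul, sub_zero] at hr ⊢
    have := (natDegree_lt_iff_degree_lt hf0).2 hr
    have := toeplitzForm_pos_of_degree_lt hm hd hA hlim hσ (p - f.natDegree - 1) f hf0 (by omega)
    simpa using this
  · have := toeplitzForm_nonneg hm hd hA hlim hσ hr
    positivity

end Positivity

/-! ### The Yule–Walker equations as orthogonality relations -/

lemma coeff_prod_X_sub_C (p : ℕ) (α : Fin p → ℝ) {j : ℕ} (hj : j ≤ p) :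
    (∏ i, (X - C (α i))).coeff (p - j) = (-1) ^ j * esymmEval p α j := by
  have h := Multiset.prod_X_sub_C_coeff ((Finset.univ : Finset (Fin p)).val.map α)
    (k := p - j) (by simp)
  have hc : p - (p - j) = j := by omega
  have hcard : ((Finset.univ : Finset (Fin p)).val.map α).card = p := by simp
  have hprod : (((Finset.univ : Finset (Fin p)).val.map α).map fun t => X - C t).prod =
      ∏ i, (X - C (α i)) := by
    rw [Multiset.map_map]; rfl
  rwa [Finset.esymm_map_val, hcard, hc, hprod] at h

/-- The Yule–Walker equations as orthogonality of `∏ i, (X - α i)` to the monomials `X ^ m`,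
`m < p`, for the form with symbol `G`. The equation of index `k` corresponds to `m = p - k`. -/
lemma orthogonal_of_yule_walker (p : ℕ) (α : Fin p → ℝ) (G : ℕ → ℝ)
    (hyw : ∀ k ∈ Finset.Icc 1 p, G k = ∑ j ∈ Finset.Icc 1 p,
      ((-1 : ℝ) ^ (j + 1) * esymmEval p α j) * G ((k : ℤ) - (j : ℤ)).natAbs)
    (m : ℕ) (hm : m < p) :
    ∑ i ∈ range (p + 1), (∏ i, (X - C (α i))).coeff i * G ((i : ℤ) - (m : ℤ)).natAbs = 0 := by
  have hk := hyw (p - m) (by simp; omega)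
  rw [← Finset.sum_range_reflect, Finset.sum_range_succ']
  have h0 : (∏ i, (X - C (α i))).coeff p = 1 := by
    simpa [esymmEval] using coeff_prod_X_sub_C p α (Nat.zero_le p)
  have hI : ∀ F : ℕ → ℝ, ∑ k ∈ range p, F (k + 1) = ∑ j ∈ Finset.Icc 1 p, F j := by
    intro F
    rw [Finset.range_eq_Ico, Finset.sum_Ico_add' F 0 p 1]
    refine Finset.sum_congr ?_ fun _ _ => rfl
    ext; simp only [Finset.mem_Ico, Finset.mem_Icc]; omega
  rw [hI fun j => (∏ i, (X - C (α i)) : ℝ[X]).coeff (p + 1 - 1 - j)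
    * G (((p + 1 - 1 - j : ℕ) : ℤ) - (m : ℤ)).natAbs]
  have hn : ((p : ℤ) - (m : ℤ)).natAbs = p - m := by omega
  simp only [Nat.add_sub_cancel, Nat.sub_zero, h0, one_mul, hn]
  rw [hk, ← Finset.sum_add_distrib]
  refine Finset.sum_eq_zero fun j hj => ?_
  have hj' := Finset.mem_Icc.1 hj
  rw [coeff_prod_X_sub_C p α hj'.2,
    show (((p - j : ℕ) : ℤ) - (m : ℤ)) = ((p - m : ℕ) : ℤ) - (j : ℤ) by omega, pow_succ]
  ring

end YuleWalker

open YuleWalker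

/-- For `α₁, …, α_p ∈ [0,1)`, `φ̃_k = (-1)^{k+1} e_k(α₁, …, α_p)`, and `(γ̃₁, …, γ̃_p)`
the (unique) solution of the Yule–Walker system with `γ̃₀ = 1`, the
`(p+1) × (p+1)` symmetric Toeplitz matrix `Γ` with `Γ_{ij} = γ̃_{|i-j|}` is positive
definite. -/
theorem yule_walker_toeplitz_posDef (p : ℕ) (hp : 1 ≤ p) (α : Fin p → ℝ)
    (hα : ∀ i, α i ∈ Set.Ico (0 : ℝ) 1) (g : Fin p → ℝ)
    (hyw : ∀ k ∈ Finset.Icc 1 p,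
      extGamma p g k =
        ∑ j ∈ Finset.Icc 1 p,
          ((-1 : ℝ) ^ (j + 1) * esymmEval p α j) *
            extGamma p g ((k : ℤ) - (j : ℤ)).natAbs) :
    (Matrix.of fun i j : Fin (p + 1) =>
      extGamma p g ((i : ℤ) - (j : ℤ)).natAbs).PosDef := by
  refine Matrix.PosDef.of_dotProduct_mulVec_pos ?_ fun x hx => ?_
  · ext i j
    simp only [Matrix.conjTranspose_apply, Matrix.of_apply, star_trivial]
    rw [← Int.natAbs_neg, neg_sub]
  · set f : ℝ[X] := ∑ i : Fin (p + 1), C (x i) * X ^ (i : ℕ) with hf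
    have hc : ∀ i : Fin (p + 1), f.coeff i = x i := by
      intro i
      simp [hf, coeff_X_pow, Fin.val_inj]
    have hdeg : f.degree ≤ p := by
      refine (degree_sum_le _ _).trans (Finset.sup_le fun i _ => ?_)
      refine (degree_C_mul_X_pow_le _ _).trans ?_
      exact_mod_cast Nat.lt_succ_iff.1 i.2
    have hf0 : f ≠ 0 := by
      intro h
      apply hx
      ext i
      rw [← hc i, h]; simp
    have key := toeplitzForm_pos (p := p) (G := extGamma p g)
      (monic_prod_of_monic Finset.univ (fun i => X - C (α i)) fun i _ => monic_X_sub_C _)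
      (by simp [degree_prod]) (orthogonal_of_yule_walker p α _ hyw)
      (tendsto_coeff_modByMonic α hα Finset.univ) hp (by simp [extGamma]) hdeg hf0
    refine key.trans_eq ?_
    unfold toeplitzForm
    simp only [Finset.sum_range, hc, dotProduct, Matrix.mulVec, Matrix.of_apply,
      star_trivial, Finset.mul_sum]
    exact Finset.sum_congr rfl fun i _ => Finset.sum_congr rfl fun j _ => by ring
end

section
/- Let α₁, α₂, α₃ ∈ [0, 1) and set φ₁ = α₁ + α₂ + α₃, φ₂ = −(α₁α₂ + α₂α₃ + α₁α₃), φ₃ = α₁α₂α₃. Then the 3 × 3 Yule–Walker system with γ₀ = 1, namely γ₁ = φ₁ + φ₂γ₁ + φ₃γ₂, γ₂ = φ₁γ₁ + φ₂ + φ₃γ₁, γ₃ = φ₁γ₂ + φ₂γ₁ + φ₃, has a unique solution (γ₁, γ₂, γ₃) ∈ ℝ³, and the innovation variance σ_Z² := 1 − φ₁γ₁ − φ₂γ₂ − φ₃γ₃ equals (1 − α₁²)(1 − α₂²)(1 − α₃²)(1 − α₁α₂)(1 − α₂α₃)(1 − α₁α₃) / (1 + α₁α₂ + α₂α₃ + α₁α₃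 − α₁α₂α₃(α₁α₂α₃ + α₁ + α₂ + α₃)). -/
/-! The second equation gives `γ₂ = (φ₁ + φ₃) γ₁ + φ₂`; substituting it into the first leaves
`D γ₁ = φ₁ + φ₂ φ₃` with `D = 1 - φ₂ - φ₃ (φ₁ + φ₃)`. In terms of the roots, `D` is the denominator
of the stated closed form, and it is positive on `[0,1)³`, so the system has exactly one solution.
The value of the innovation variance is then an identity of rational functions in the roots. -/

/-- Each subtracted term is absorbed by an added one: the expression equals
`(1 - (abc)²) + ab(1 - c²) + bc(1 - a²) + ac(1 - b²)`. -/
lemma yule_walker_denom_pos {a b c : ℝ} (ha : a ∈ Set.Ico (0 : ℝ) 1) (hb : b ∈ Set.Ico (0 : ℝ) 1)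
    (hc : c ∈ Set.Ico (0 : ℝ) 1) :
    0 < 1 + a * b + b * c + a * c - a * b * c * (a * b * c + a + b + c) := by
  obtain ⟨ha0, ha1⟩ := ha
  obtain ⟨hb0, hb1⟩ := hb
  obtain ⟨hc0, hc1⟩ := hc
  have hab : a * b < 1 := mul_lt_one_of_nonneg_of_lt_one_left ha0 ha1 hb1.le
  have habc : a * b * c < 1 :=
    mul_lt_one_of_nonneg_of_lt_one_left (mul_nonneg ha0 hb0) hab hc1.le
  have h0 : 0 < 1 - (a * b * c) ^ 2 :=
    sub_pos.2 (pow_lt_one₀ (by positivity) habc two_ne_zero)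
  have h1 : 0 ≤ a * b * (1 - c ^ 2) :=
    mul_nonneg (mul_nonneg ha0 hb0) (sub_nonneg.2 (pow_le_one₀ hc0 hc1.le))
  have h2 : 0 ≤ b * c * (1 - a ^ 2) :=
    mul_nonneg (mul_nonneg hb0 hc0) (sub_nonneg.2 (pow_le_one₀ ha0 ha1.le))
  have h3 : 0 ≤ a * c * (1 - b ^ 2) :=
    mul_nonneg (mul_nonneg ha0 hc0) (sub_nonneg.2 (pow_le_one₀ hb0 hb1.le))
  linarith


/-- For roots `α₁, α₂, α₃ ∈ [0,1)` and AR-3 coefficients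
`φ₁ = α₁+α₂+α₃`, `φ₂ = -(α₁α₂+α₂α₃+α₁α₃)`, `φ₃ = α₁α₂α₃`, the 3×3 Yule–Walker
system with `γ₀ = 1` has a unique solution `(γ₁, γ₂, γ₃)`, and the innovation
variance `σ_Z² = 1 - φ₁γ₁ - φ₂γ₂ - φ₃γ₃` has the stated closed form. -/
theorem yule_walker_ar3_sigma (α₁ α₂ α₃ : ℝ)
    (h₁ : α₁ ∈ Set.Ico (0 : ℝ) 1) (h₂ : α₂ ∈ Set.Ico (0 : ℝ) 1)
    (h₃ : α₃ ∈ Set.Ico (0 : ℝ) 1)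
    (φ₁ φ₂ φ₃ : ℝ)
    (hφ₁ : φ₁ = α₁ + α₂ + α₃)
    (hφ₂ : φ₂ = -(α₁ * α₂ + α₂ * α₃ + α₁ * α₃))
    (hφ₃ : φ₃ = α₁ * α₂ * α₃) :
    ∃ γ : ℝ × ℝ × ℝ,
      (γ.1 = φ₁ + φ₂ * γ.1 + φ₃ * γ.2.1 ∧
       γ.2.1 = φ₁ * γ.1 + φ₂ + φ₃ * γ.1 ∧
       γ.2.2 = φ₁ * γ.2.1 + φ₂ * γ.1 + φ₃) ∧
      (1 - φ₁ * γ.1 - φ₂ * γ.2.1 - φ₃ * γ.2.2 =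
        (1 - α₁ ^ 2) * (1 - α₂ ^ 2) * (1 - α₃ ^ 2) *
          (1 - α₁ * α₂) * (1 - α₂ * α₃) * (1 - α₁ * α₃) /
          (1 + α₁ * α₂ + α₂ * α₃ + α₁ * α₃ -
            α₁ * α₂ * α₃ * (α₁ * α₂ * α₃ + α₁ + α₂ + α₃))) ∧
      ∀ γ' : ℝ × ℝ × ℝ,
        (γ'.1 = φ₁ + φ₂ * γ'.1 + φ₃ * γ'.2.1 ∧
         γ'.2.1 = φ₁ * γ'.1 + φ₂ + φ₃ * γ'.1 ∧
         γ'.2.2 = φ₁ * γ'.2.1 + φ₂ * γ'.1 + φ₃) → γ' = γ := by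
  have hD := (yule_walker_denom_pos h₁ h₂ h₃).ne'
  set D := 1 + α₁ * α₂ + α₂ * α₃ + α₁ * α₃ -
    α₁ * α₂ * α₃ * (α₁ * α₂ * α₃ + α₁ + α₂ + α₃) with hDdef
  have hDφ : D = 1 - φ₂ - φ₃ * (φ₁ + φ₃) := by
    rw [hDdef, hφ₁, hφ₂, hφ₃]; ring
  obtain ⟨g, hg⟩ : ∃ g, g = (φ₁ + φ₂ * φ₃) / D := ⟨_, rfl⟩
  have hgD : g * D = φ₁ + φ₂ * φ₃ := by rw [hg, div_mul_cancel₀ _ hD]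
  refine ⟨(g, (φ₁ + φ₃) * g + φ₂, φ₁ * ((φ₁ + φ₃) * g + φ₂) + φ₂ * g + φ₃), ⟨?_, ?_, ?_⟩, ?_, ?_⟩
  · rw [hDφ] at hgD
    linear_combination hgD
  · ring
  · ring
  · -- The variance is affine in `g`; multiplying by `D` and using `g * D = φ₁ + φ₂ * φ₃`
    -- turns the claim into a polynomial identity in the roots.
    rw [eq_div_iff hD]
    dsimp only
    have key : (1 - φ₁ * g - φ₂ * ((φ₁ + φ₃) * g + φ₂) -
        φ₃ * (φ₁ * ((φ₁ + φ₃) * g + φ₂) + φ₂ * g + φ₃)) * D =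
        (1 - φ₂ ^ 2 - φ₁ * φ₂ * φ₃ - φ₃ ^ 2) * D -
        (φ₁ + φ₂ * (φ₁ + φ₃) + φ₃ * (φ₁ * (φ₁ + φ₃) + φ₂)) * (φ₁ + φ₂ * φ₃) := by
      rw [← hgD]; ring
    rw [key, hDdef, hφ₁, hφ₂, hφ₃]
    ring
  · rintro ⟨x, y, z⟩ ⟨e1, e2, e3⟩
    dsimp only at e1 e2 e3
    have hx : x = g := by
      apply mul_right_cancel₀ hD
      rw [hgD, hDφ]
      linear_combination e1 + φ₃ * e2
    have hy : y = (φ₁ + φ₃) * g + φ₂ := by rw [e2, hx]; ring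
    rw [e3, hy, hx]
end

section
/- For all α₁, α₂, α₃ ∈ [0, 1), the quantity 1 + α₁α₂ + α₂α₃ + α₁α₃ − α₁α₂α₃·(α₁α₂α₃ + α₁ + α₂ + α₃) is strictly positive. -/
/-- For all `α₁, α₂, α₃ ∈ [0,1)`, the denominator of the AR-3 innovation-variance
formula, `1 + α₁α₂ + α₂α₃ + α₁α₃ - α₁α₂α₃(α₁α₂α₃ + α₁ + α₂ + α₃)`, is strictly
positive. -/
theorem ar3_denominator_pos (α₁ α₂ α₃ : ℝ)
    (h₁ : α₁ ∈ Set.Ico (0 : ℝ) 1) (h₂ : α₂ ∈ Set.Ico (0 : ℝ) 1)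
    (h₃ : α₃ ∈ Set.Ico (0 : ℝ) 1) :
    0 < 1 + α₁ * α₂ + α₂ * α₃ + α₁ * α₃ -
        α₁ * α₂ * α₃ * (α₁ * α₂ * α₃ + α₁ + α₂ + α₃) := by
  obtain ⟨a0, a1⟩ := h₁
  obtain ⟨b0, b1⟩ := h₂
  obtain ⟨c0, c1⟩ := h₃
  have hp0 : 0 ≤ α₁ * α₂ * α₃ := by positivity
  have hp1 : α₁ * α₂ * α₃ < 1 :=
    mul_lt_one_of_nonneg_of_lt_one_right (mul_le_one₀ a1.le b0 b1.le) c0 c1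
  have sq_lt {x : ℝ} (h0 : 0 ≤ x) (h1 : x < 1) : 0 < 1 - x ^ 2 :=
    sub_pos.mpr (pow_lt_one₀ h0 h1 two_ne_zero)
  have hp := sq_lt hp0 hp1
  have ha := mul_nonneg (mul_nonneg b0 c0) (sq_lt a0 a1).le
  have hb := mul_nonneg (mul_nonneg a0 c0) (sq_lt b0 b1).le
  have hc := mul_nonneg (mul_nonneg a0 b0) (sq_lt c0 c1).le
  -- Each subtracted term pairs with a product of two roots, as in
  -- `α₂α₃ - α₁α₂α₃ * α₁ = α₂α₃(1 - α₁²)`; the rest is `1 - (α₁α₂α₃)² > 0`.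
  linarith only [hp, ha, hb, hc]
end
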